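/- For every positive integer n and all nonnegative integers m and k, the number of permutations π of {1,...,n} with maj(π) = m and ides(π) = k equals the number of inversion tables e of length n with amaj(e) = m and row(e) = k. That is, the pair of statistics (maj, ides) on permutations of length n is equidistributed with the pair (amaj, row) on inversion tables of length n. -/

import Mathlib

/-!
Both families are grown one letter at a time, and the two growth processes are compared.

A permutation `π'` of length `n + 1` arises from a unique `π` of length `n` by inserting the letter
`n + 1` into one of the `n + 1` gaps of the word of `π⁻¹`. The insertion leaves `ides` unchanged when
the gap is a descent of `π⁻¹` or the final gap (such gaps are flagged) and raises it by one
otherwise; moreover `n` is a descent of `π'` exactly when the gap lies to the left of the letter `n`.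
An inversion table of length `n + 1` arises by appending one of the values `n + 1, …, 1`. This leaves
`row` unchanged when the value is `1` or already occurs (such values are flagged) and raises it by
one otherwise; moreover `n` is an ascent exactly when the value is greater than the last entry.

In both cases the state is a list of flags cut into a left part `X` (choices that add `n` to the
major index) and a right part `Y` (choices that add nothing). Choosing an entry of the list leads to
a state in which the entry is replaced by `true`, to the right of the new cut, and an extra `false`
is put in the left part: at its right end for permutations, at its left end for tables. Hence the two
processes agree for every weight on states that depends only on the multisets of entries of `X` and
of `Y`, provided that the weights obtained by summing over successors have the same property. The
choices are ordered, so this needs an additional hypothesis, namely the exchange relation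
`T X (false :: Y) + T (true :: X) Y = T X (true :: Y) + T (false :: X) Y`.
It makes the sum over successors invariant under adjacent transpositions (`Good.sweep_perm_right`),
and that sum satisfies the same relation (`Good.sweep`). Induction on `n` then gives equal totals for
all such weights (`permTotal_eq_tableTotal`), and the indicator of a given major index and a given
number of flagged entries is such a weight.
-/

/-- The descent set of a permutation `π` of `{1,...,n}` (1-indexed):
`DES(π) = {i ∈ {1,...,n-1} : π_i > π_{i+1}}`.  Here `π_i` is `π ⟨i-1, _⟩`
since `Fin n` is 0-indexed. -/
def permDES (n : ℕ) (π : Equiv.Perm (Fin n)) : Finset ℕ :=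
  (Finset.Ico 1 n).filter fun i =>
    ∃ h : i < n, ∃ h' : i - 1 < n, π ⟨i, h⟩ < π ⟨i - 1, h'⟩

/-- `des(π)`, the number of descents of `π`. -/
def permDes (n : ℕ) (π : Equiv.Perm (Fin n)) : ℕ := (permDES n π).card

/-- `ides(π) = des(π⁻¹)`. -/
def permIdes (n : ℕ) (π : Equiv.Perm (Fin n)) : ℕ := permDes n π⁻¹

/-- `maj(π)`, the sum of the elements of `DES(π)`. -/
def permMaj (n : ℕ) (π : Equiv.Perm (Fin n)) : ℕ := ∑ i ∈ permDES n π, i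

/-- An inversion table of length `n`: a sequence `e_1 … e_n` with `1 ≤ e_i ≤ i`.
The entry `e_i` (for `1 ≤ i ≤ n`) is `e.1 ⟨i-1, _⟩`. -/
abbrev InvTable (n : ℕ) :=
  {e : Fin n → Fin (n + 1) // ∀ i : Fin n, 1 ≤ (e i : ℕ) ∧ (e i : ℕ) ≤ (i : ℕ) + 1}

/-- The ascent set `ASC(e) = {i ∈ {1,...,n-1} : e_i < e_{i+1}}`. -/
def invASC (n : ℕ) (e : InvTable n) : Finset ℕ :=
  (Finset.Ico 1 n).filter fun i =>
    ∃ h : i < n, ∃ h' : i - 1 < n, (e.1 ⟨i - 1, h'⟩ : ℕ) < (e.1 ⟨i, h⟩ : ℕ)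

/-- `asc(e)`, the number of ascents of `e`. -/
def invAsc (n : ℕ) (e : InvTable n) : ℕ := (invASC n e).card

/-- `ROW(e) = {e_i : 1 ≤ i ≤ n} \ {1}`. -/
def invROW (n : ℕ) (e : InvTable n) : Finset ℕ :=
  (Finset.image (fun i : Fin n => (e.1 i : ℕ)) Finset.univ) \ {1}

/-- `row(e) = #ROW(e)`. -/
def invRow (n : ℕ) (e : InvTable n) : ℕ := (invROW n e).card

/-- `amaj(e)`, the sum of the elements of `ASC(e)`. -/
def invAmaj (n : ℕ) (e : InvTable n) : ℕ := ∑ i ∈ invASC n e, i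

namespace DoubleEulerian

/-! ### Good weights and sums over cuts -/

/-- The class of weights on pairs `(X, Y)` of lists of flags for which the two families are shown
to have equal totals: `T` depends only on the multisets of entries of `X` and `Y`, and moving a
`false` entry and moving a `true` entry from `X` to `Y` change the value by the same amount
(written without subtraction). -/
def Good (T : List Bool → List Bool → ℕ) : Prop :=
  (∀ X X' Y Y', X.Perm X' → Y.Perm Y' → T X Y = T X' Y') ∧
  ∀ X Y, T X (false :: Y) + T (true :: X) Y = T X (true :: Y) + T (false :: X) Y

/-- Total of `T` over all ways to choose an entry of `Y` and cut there, discarding the chosen entry.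
The list `X` is stored nearest entry first, as in a zipper. -/
def sweep (T : List Bool → List Bool → ℕ) : List Bool → List Bool → ℕ
  | _, [] => 0
  | X, y :: Y => T X Y + sweep T (y :: X) Y

lemma Good.symm {T} (h : Good T) : Good (fun X Y => T Y X) :=
  ⟨fun X X' Y Y' hX hY => h.1 _ _ _ _ hY hX, fun X Y => by have := h.2 Y X; dsimp only; omega⟩

lemma Good.add {T U} (h : Good T) (h' : Good U) : Good (fun X Y => T X Y + U X Y) :=
  ⟨fun X X' Y Y' hX hY => by dsimp only; rw [h.1 _ _ _ _ hX hY, h'.1 _ _ _ _ hX hY],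
    fun X Y => by have := h.2 X Y; have := h'.2 X Y; dsimp only; omega⟩

lemma Good.shift {T} (h : Good T) : Good (fun X Y => T (false :: X) (true :: Y)) := by
  refine ⟨fun X X' Y Y' hX hY => h.1 _ _ _ _ (hX.cons _) (hY.cons _), fun X Y => ?_⟩
  have e1 : ∀ z, T (false :: X) (true :: z :: Y) = T (false :: X) (z :: true :: Y) := fun z =>
    h.1 _ _ _ _ (List.Perm.refl _) (List.Perm.swap _ _ _)
  have e2 : ∀ z, T (false :: z :: X) (true :: Y) = T (z :: false :: X) (true :: Y) := fun z =>
    h.1 _ _ _ _ (List.Perm.swap _ _ _) (List.Perm.refl _)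
  simp only [e1, e2]
  exact h.2 (false :: X) (true :: Y)

lemma Good.sweep_perm_left {T} (h : Good T) (Y : List Bool) :
    ∀ X X' : List Bool, X.Perm X' → sweep T X Y = sweep T X' Y := by
  induction Y with
  | nil => intros; simp [sweep]
  | cons a l ih =>
    intro X X' hX
    simp only [sweep]
    rw [h.1 _ _ _ _ hX (List.Perm.refl _), ih _ _ (hX.cons a)]

lemma Good.sweep_perm_right {T} (h : Good T) {Y Y' : List Bool} (hY : Y.Perm Y') :
    ∀ X : List Bool, sweep T X Y = sweep T X Y' := by
  induction hY with
  | nil => intro X; rfl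
  | cons x h1 ih =>
    intro X
    simp only [sweep]
    rw [h.1 _ _ _ _ (List.Perm.refl _) h1, ih]
  | swap x y l =>
    intro X
    simp only [sweep]
    rw [h.sweep_perm_left l _ _ (List.Perm.swap y x X), ← add_assoc, ← add_assoc]
    congr 1
    -- Exchanging two adjacent unequal entries is exactly the second condition of `Good`.
    have := h.2 X l
    cases x <;> cases y <;> simp_all
  | trans h1 h2 ih1 ih2 =>
    intro X
    exact (ih1 X).trans (ih2 X)

lemma Good.sweep {T} (h : Good T) : Good (sweep T) :=
  ⟨fun X X' Y Y' hX hY => (h.sweep_perm_left Y X X' hX).trans (h.sweep_perm_right hY X'),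
    fun X Y => by simp only [DoubleEulerian.sweep]; omega⟩

/-- The total of `T` over the cuts of `P` at the positions from `s` on. -/
lemma sweep_take_drop (T : List Bool → List Bool → ℕ) (P : List Bool) (s : ℕ) (hs : s ≤ P.length) :
    sweep T (P.take s).reverse (P.drop s) =
      ∑ j ∈ Finset.Ico s P.length, T (P.take j).reverse (P.drop (j + 1)) := by
  induction hs using Nat.decreasingInduction with
  | self => simp [sweep]
  | of_succ k hk ih =>
    have h : (P.take (k + 1)).reverse = P[k] :: (P.take k).reverse := by
      rw [List.take_succ_eq_append_getElem hk]
      simp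
    rw [Finset.sum_eq_sum_Ico_succ_bot hk, ← ih, h, List.drop_eq_getElem_cons hk, sweep]

/-- The total of `T` over the cuts of `P` at the positions before `s`. -/
lemma sweep_symm_take_drop (T : List Bool → List Bool → ℕ) (P : List Bool) (s : ℕ)
    (hs : s ≤ P.length) :
    sweep (fun X Y => T Y X) (P.drop s) (P.take s).reverse =
      ∑ j ∈ Finset.range s, T (P.take j).reverse (P.drop (j + 1)) := by
  induction s with
  | zero => simp [sweep]
  | succ k ih =>
    rw [Finset.sum_range_succ, ← ih (by omega), List.take_succ_eq_append_getElem hs]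
    simp only [List.reverse_append, List.reverse_singleton, List.singleton_append, sweep]
    rw [List.drop_eq_getElem_cons hs, add_comm]

/-- One insertion step for weights that also depend on the accumulated major index `m`: a cut of `X`
adds `n` to the index, a cut of `Y` adds nothing. -/
def step (n : ℕ) (f : ℕ → List Bool → List Bool → ℕ) (m : ℕ) (X Y : List Bool) : ℕ :=
  sweep (fun X Y => f m (false :: X) (true :: Y)) X Y +
    sweep (fun Y X => f (m + n) (false :: X) (true :: Y)) Y X

lemma good_step {n f} (h : ∀ m, Good (f m)) (m : ℕ) : Good (step n f m) :=
  (h m).shift.sweep.add (h (m + n)).shift.symm.sweep.symm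

lemma step_take_drop (n : ℕ) (f : ℕ → List Bool → List Bool → ℕ) (m : ℕ) (P : List Bool) (s : ℕ)
    (hP : P.length = n + 1) (hs : s ≤ n + 1) :
    step n f m (P.take s).reverse (P.drop s) =
      ∑ g : Fin (n + 1), f (m + if (g : ℕ) < s then n else 0)
        (false :: (P.take g).reverse) (true :: P.drop (g + 1)) := by
  rw [step, sweep_take_drop _ _ _ (by omega),
    sweep_symm_take_drop (fun X Y => f (m + n) (false :: X) (true :: Y)) _ _ (by omega),
    Fin.sum_univ_eq_sum_range (fun g => f (m + if g < s then n else 0)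
        (false :: (P.take g).reverse) (true :: P.drop (g + 1))), hP, add_comm,
    ← Finset.sum_range_add_sum_Ico _ hs]
  congr 1
  · refine Finset.sum_congr rfl fun j hj => ?_
    rw [if_pos (Finset.mem_range.1 hj)]
  · refine Finset.sum_congr rfl fun j hj => ?_
    rw [if_neg (by have := (Finset.mem_Ico.1 hj).1; omega), add_zero]

lemma count_true_map_range (n : ℕ) (p : ℕ → Bool) :
    ((List.range n).map p).count true = ((Finset.range n).filter fun j => p j = true).card := by
  induction n with
  | zero => simp
  | succ n ih =>
    rw [List.range_succ, List.map_append, List.count_append, ih, Finset.range_add_one,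
      Finset.filter_insert]
    cases h : p n <;> simp [h]

/-! ### Growing permutations -/

/-- The word of a permutation as a total function on `ℕ` (zero-indexed, junk value `0`). -/
def val {n : ℕ} (π : Equiv.Perm (Fin n)) (i : ℕ) : ℕ := if h : i < n then (π ⟨i, h⟩ : ℕ) else 0

lemma mem_permDES {n : ℕ} (π : Equiv.Perm (Fin n)) (i : ℕ) :
    i ∈ permDES n π ↔ 1 ≤ i ∧ i < n ∧ val π i < val π (i - 1) := by
  simp only [permDES, Finset.mem_filter, Finset.mem_Ico, val, Fin.lt_def]
  constructor
  · rintro ⟨⟨h1, h2⟩, h, h', hlt⟩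
    refine ⟨h1, h2, ?_⟩
    rwa [dif_pos h, dif_pos h']
  · rintro ⟨h1, h2, h3⟩
    have h' : i - 1 < n := by omega
    rw [dif_pos h2, dif_pos h'] at h3
    exact ⟨⟨h1, h2⟩, h2, h', h3⟩

/-- The permutation of `Fin (n + 1)` with last entry `g` whose other entries are ordered like those
of `π`; on inverses, this inserts the new largest letter at position `g`. -/
def ins {n : ℕ} (g : Fin (n + 1)) (π : Equiv.Perm (Fin n)) : Equiv.Perm (Fin (n + 1)) :=
  (finSuccEquiv' (Fin.last n)).trans ((Equiv.optionCongr π).trans (finSuccEquiv' g).symm)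

lemma ins_last {n : ℕ} (g : Fin (n + 1)) (π : Equiv.Perm (Fin n)) : ins g π (Fin.last n) = g := by
  simp [ins]

lemma ins_castSucc {n : ℕ} (g : Fin (n + 1)) (π : Equiv.Perm (Fin n)) (i : Fin n) :
    ins g π i.castSucc = g.succAbove (π i) := by
  have h : finSuccEquiv' (Fin.last n) i.castSucc = some i := by
    rw [← Fin.succAbove_last_apply, finSuccEquiv'_succAbove]
  simp [ins, h]

lemma ins_bijective (n : ℕ) :
    Function.Bijective (fun p : Fin (n + 1) × Equiv.Perm (Fin n) => ins p.1 p.2) := by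
  rw [Fintype.bijective_iff_injective_and_card]
  refine ⟨?_, by simp [Fintype.card_perm, Nat.factorial_succ]⟩
  rintro ⟨g, π⟩ ⟨g', π'⟩ h
  have h1 : g = g' := by
    have := DFunLike.congr_fun h (Fin.last n)
    simpa [ins_last] using this
  subst h1
  have h2 : π = π' := by
    ext i
    have := DFunLike.congr_fun h i.castSucc
    simp only [ins_castSucc] at this
    rw [Fin.succAbove_right_injective this]
  rw [h2]

lemma val_lt {n : ℕ} (π : Equiv.Perm (Fin n)) {i : ℕ} (h : i < n) : val π i < n := by
  simp [val, h]

lemma coe_succAbove {n : ℕ} (g : Fin (n + 1)) (i : Fin n) :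
    (g.succAbove i : ℕ) = if (i : ℕ) < g then (i : ℕ) else i + 1 := by
  by_cases h : (i : ℕ) < g
  · rw [if_pos h, Fin.succAbove_of_castSucc_lt _ _ (by simpa [Fin.lt_def] using h)]; rfl
  · rw [if_neg h, Fin.succAbove_of_le_castSucc _ _ (by simpa [Fin.le_def] using h)]; rfl

lemma val_ins {n : ℕ} (g : Fin (n + 1)) (π : Equiv.Perm (Fin n)) (i : ℕ) (hi : i < n) :
    val (ins g π) i = if val π i < g then val π i else val π i + 1 := by
  have h := ins_castSucc g π ⟨i, hi⟩
  have h' : (⟨i, by omega⟩ : Fin (n + 1)) = Fin.castSucc ⟨i, hi⟩ := rfl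
  have e1 : val π i = π ⟨i, hi⟩ := dif_pos hi
  rw [e1, val, dif_pos (by omega), h', h, coe_succAbove]

lemma val_ins_last {n : ℕ} (g : Fin (n + 1)) (π : Equiv.Perm (Fin n)) : val (ins g π) n = g := by
  have h' : (⟨n, by omega⟩ : Fin (n + 1)) = Fin.last n := rfl
  simp only [val]
  rw [dif_pos (by omega), h', ins_last]

lemma val_ins_inv {n : ℕ} (g : Fin (n + 1)) (π : Equiv.Perm (Fin n)) (j : ℕ) (hj : j ≤ n) :
    val (ins g π)⁻¹ j = if j < g then val π⁻¹ j else if j = g then n else val π⁻¹ (j - 1) := by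
  have hg := g.2
  by_cases h2 : j = g
  · have h' : (⟨j, by omega⟩ : Fin (n + 1)) = g := Fin.ext h2
    rw [if_neg (by omega), if_pos h2, val, dif_pos (by omega), h']
    have : (ins g π)⁻¹ g = Fin.last n := by
      rw [Equiv.Perm.inv_eq_iff_eq, ins_last]
    rw [this]; rfl
  have key : ∀ i : Fin n, (ins g π)⁻¹ (g.succAbove i) = (π⁻¹ i).castSucc := by
    intro i
    rw [Equiv.Perm.inv_eq_iff_eq, ins_castSucc]
    simp
  by_cases h1 : j < g
  · have hjn : j < n := by omega
    have h' : (⟨j, by omega⟩ : Fin (n + 1)) = g.succAbove ⟨j, hjn⟩ :=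
      Fin.ext (by rw [coe_succAbove]; simp [h1])
    rw [if_pos h1, val, val, dif_pos (by omega), dif_pos hjn, h', key]; rfl
  · have hjn : j - 1 < n := by omega
    have h' : (⟨j, by omega⟩ : Fin (n + 1)) = g.succAbove ⟨j - 1, hjn⟩ :=
      Fin.ext (by rw [coe_succAbove]; simp only; rw [if_neg (by omega)]; omega)
    rw [if_neg h1, if_neg h2, val, val, dif_pos (by omega), dif_pos hjn, h', key]; rfl

lemma permMaj_ins {n : ℕ} (hn : 0 < n) (g : Fin (n + 1)) (π : Equiv.Perm (Fin n)) :
    permMaj (n + 1) (ins g π) =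
      permMaj n π + if (g : ℕ) < val π (n - 1) + 1 then n else 0 := by
  have h : permDES (n + 1) (ins g π) =
      if (g : ℕ) < val π (n - 1) + 1 then insert n (permDES n π) else permDES n π := by
    ext i
    have e1 : i ∈ permDES (n + 1) (ins g π) ↔
        i ∈ permDES n π ∨ (i = n ∧ (g : ℕ) < val π (n - 1) + 1) := by
      rw [mem_permDES, mem_permDES]
      rcases lt_trichotomy i n with hi | hi | hi
      · by_cases h1 : 1 ≤ i
        · rw [val_ins _ _ _ hi, val_ins _ _ _ (show i - 1 < n by omega)]
          split_ifs <;> omega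
        · omega
      · subst hi
        rw [val_ins_last, val_ins _ _ _ (show i - 1 < i by omega)]
        split_ifs <;> omega
      · omega
    rw [e1]
    split_ifs with hg
    · simp [hg, or_comm]
    · simp [hg]
  have hnot : n ∉ permDES n π := by rw [mem_permDES]; omega
  rw [permMaj, permMaj, h]
  split_ifs
  · rw [Finset.sum_insert hnot, add_comm]
  · simp

/-- The flags of the `n + 1` gaps of the word of `π⁻¹`, from left to right: a gap is flagged when
inserting a new largest letter there creates no new descent. -/
def permFlags {n : ℕ} (π : Equiv.Perm (Fin n)) : List Bool :=
  (List.range (n + 1)).map fun j => decide (j = n ∨ j ∈ permDES n π⁻¹)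

lemma permFlags_ins {n : ℕ} (hn : 0 < n) (g : Fin (n + 1)) (π : Equiv.Perm (Fin n)) :
    permFlags (ins g π) =
      (permFlags π).take g ++ false :: true :: (permFlags π).drop (g + 1) := by
  have hg := g.2
  apply List.ext_getElem
  · simp [permFlags]; omega
  intro j h1 h2
  have hj : j < n + 2 := by simpa [permFlags, Nat.lt_succ_iff] using h1
  have hmem : j ∈ permDES (n + 1) (ins g π)⁻¹ ↔
      1 ≤ j ∧ j < n + 1 ∧ val (ins g π)⁻¹ j < val (ins g π)⁻¹ (j - 1) := mem_permDES _ _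
  have hlen : ((permFlags π).take g).length = g := by simp [permFlags]
  by_cases c1 : j < g
  · rw [List.getElem_append_left (by omega)]
    simp only [permFlags, List.getElem_map, List.getElem_range, List.getElem_take]
    congr 1
    rw [hmem, mem_permDES, val_ins_inv _ _ _ (by omega), val_ins_inv _ _ _ (by omega)]
    apply propext
    split_ifs <;> omega
  rw [List.getElem_append_right (by omega)]
  by_cases c2 : j = g
  · have : j - ((permFlags π).take g).length = 0 := by omega
    simp only [this, List.getElem_cons_zero]
    simp only [permFlags, List.getElem_map, List.getElem_range, decide_eq_false_iff_not]
    rw [hmem]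
    by_cases h0 : 1 ≤ j
    · have := val_lt π⁻¹ (show j - 1 < n by omega)
      rw [val_ins_inv _ _ _ (by omega), val_ins_inv _ _ _ (by omega)]
      split_ifs <;> omega
    · omega
  by_cases c3 : j = g + 1
  · have : j - ((permFlags π).take g).length = 1 := by omega
    simp only [this, List.getElem_cons_succ, List.getElem_cons_zero]
    simp only [permFlags, List.getElem_map, List.getElem_range, decide_eq_true_eq]
    rw [hmem]
    by_cases h0 : j = n + 1
    · left; exact h0
    · right
      have := val_lt π⁻¹ (show j - 1 < n by omega)
      rw [val_ins_inv _ _ _ (by omega), val_ins_inv _ _ _ (by omega)]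
      split_ifs <;> omega
  · obtain ⟨i, rfl⟩ : ∃ i, j = g + 2 + i := ⟨j - g - 2, by omega⟩
    have : g + 2 + i - ((permFlags π).take g).length = i + 1 + 1 := by omega
    simp only [this, List.getElem_cons_succ]
    simp only [permFlags, List.getElem_map, List.getElem_range, List.getElem_drop]
    congr 1
    rw [hmem, mem_permDES]
    by_cases hlast : (g : ℕ) + 2 + i = n + 1
    · apply propext
      omega
    rw [val_ins_inv _ _ (g + 2 + i) (by omega), val_ins_inv _ _ (g + 2 + i - 1) (by omega)]
    have a1 : (g : ℕ) + 2 + i - 1 = g + 1 + i := by omega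
    have a2 : (g : ℕ) + 1 + i - 1 = g + i := by omega
    rw [a1, a2]
    apply propext
    split_ifs <;> omega

lemma count_permFlags {n : ℕ} (π : Equiv.Perm (Fin n)) :
    (permFlags π).count true = permIdes n π + 1 := by
  rw [permFlags, count_true_map_range]
  have : ((Finset.range (n + 1)).filter
      fun j => decide (j = n ∨ j ∈ permDES n π⁻¹) = true) = insert n (permDES n π⁻¹) := by
    ext j
    have := mem_permDES π⁻¹ j
    simp only [Finset.mem_filter, Finset.mem_range, decide_eq_true_eq, Finset.mem_insert]
    constructor
    · exact fun h => h.2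
    · intro h
      refine ⟨?_, h⟩
      rcases h with h | h
      · omega
      · have := this.1 h; omega
  rw [this, Finset.card_insert_of_notMem (by rw [mem_permDES]; omega)]
  rfl

/-- The total weight of the permutations of length `n`. The gaps of the word of `π⁻¹` are separated
into those to the left and those to the right of its largest letter. -/
def permTotal (n : ℕ) (f : ℕ → List Bool → List Bool → ℕ) : ℕ :=
  ∑ π : Equiv.Perm (Fin n), f (permMaj n π) ((permFlags π).take (val π (n - 1) + 1)).reverse
    ((permFlags π).drop (val π (n - 1) + 1))

lemma permTotal_succ {n : ℕ} (hn : 0 < n) (f : ℕ → List Bool → List Bool → ℕ) :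
    permTotal (n + 1) f = permTotal n (step n f) := by
  rw [permTotal, ← (ins_bijective n).sum_comp, Fintype.sum_prod_type_right, permTotal]
  refine Finset.sum_congr rfl fun π _ => ?_
  rw [step_take_drop _ _ _ _ _ (by simp [permFlags])
    (by have := val_lt π (show n - 1 < n by omega); omega)]
  refine Finset.sum_congr rfl fun g _ => ?_
  have hlen : ((permFlags π).take g).length = g := by simp [permFlags]
  simp only [permMaj_ins hn, permFlags_ins hn, Nat.add_sub_cancel, val_ins_last]
  congr 1
  · rw [List.take_append, hlen, List.take_of_length_le (by omega)]
    simp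
  · rw [List.drop_append, hlen, List.drop_of_length_le (by omega)]
    simp

/-! ### Growing inversion tables -/

/-- The entries of an inversion table as a total function on `ℕ` (zero-indexed positions, junk
value `0`). -/
def tval {n : ℕ} (e : InvTable n) (i : ℕ) : ℕ := if h : i < n then (e.1 ⟨i, h⟩ : ℕ) else 0

lemma tval_bounds {n : ℕ} (e : InvTable n) {i : ℕ} (h : i < n) :
    1 ≤ tval e i ∧ tval e i ≤ i + 1 := by
  rw [tval, dif_pos h]; exact e.2 ⟨i, h⟩

lemma mem_invASC {n : ℕ} (e : InvTable n) (i : ℕ) :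
    i ∈ invASC n e ↔ 1 ≤ i ∧ i < n ∧ tval e (i - 1) < tval e i := by
  simp only [invASC, Finset.mem_filter, Finset.mem_Ico, tval]
  constructor
  · rintro ⟨⟨h1, h2⟩, h, h', hlt⟩
    refine ⟨h1, h2, ?_⟩
    rwa [dif_pos h, dif_pos h']
  · rintro ⟨h1, h2, h3⟩
    have h' : i - 1 < n := by omega
    rw [dif_pos h2, dif_pos h'] at h3
    exact ⟨⟨h1, h2⟩, h2, h', h3⟩

lemma mem_invROW {n : ℕ} (e : InvTable n) (v : ℕ) :
    v ∈ invROW n e ↔ v ≠ 1 ∧ ∃ i < n, tval e i = v := by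
  simp only [invROW, Finset.mem_sdiff, Finset.mem_image, Finset.mem_univ, true_and,
    Finset.mem_singleton, tval]
  rw [and_comm]
  refine and_congr Iff.rfl ⟨?_, ?_⟩
  · rintro ⟨i, hi⟩
    exact ⟨i, i.2, by simpa using hi⟩
  · rintro ⟨i, hi, h⟩
    exact ⟨⟨i, hi⟩, by simpa [hi] using h⟩

/-- Append the entry `n + 1 - g` to an inversion table of length `n`. -/
def snoc {n : ℕ} (g : Fin (n + 1)) (e : InvTable n) : InvTable (n + 1) :=
  ⟨fun i => if h : (i : ℕ) < n then (e.1 ⟨i, h⟩).castSucc else ⟨n + 1 - g, by omega⟩, by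
    intro i
    have hi := i.2
    have hg := g.2
    by_cases h : (i : ℕ) < n
    · have := e.2 ⟨i, h⟩
      simpa [h] using this
    · simp only [h, dif_neg, not_false_eq_true]
      omega⟩

lemma tval_snoc {n : ℕ} (g : Fin (n + 1)) (e : InvTable n) (i : ℕ) (hi : i < n) :
    tval (snoc g e) i = tval e i := by
  simp [tval, snoc, hi, show i < n + 1 by omega]

lemma tval_snoc_last {n : ℕ} (g : Fin (n + 1)) (e : InvTable n) :
    tval (snoc g e) n = n + 1 - g := by
  simp [tval, snoc]

lemma tval_inj {n : ℕ} {e e' : InvTable n} (h : ∀ i < n, tval e i = tval e' i) : e = e' := by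
  apply Subtype.ext
  funext i
  have := h i i.2
  simp only [tval, i.2, dif_pos] at this
  exact Fin.ext this

lemma snoc_bijective (n : ℕ) :
    Function.Bijective (fun p : Fin (n + 1) × InvTable n => snoc p.1 p.2) := by
  constructor
  · rintro ⟨g, e⟩ ⟨g', e'⟩ h
    have h : snoc g e = snoc g' e' := h
    have h1 : g = g' := by
      have := tval_snoc_last g e
      rw [h, tval_snoc_last] at this
      apply Fin.ext
      omega
    have h2 : e = e' := tval_inj fun i hi => by
      rw [← tval_snoc g e i hi, h, tval_snoc _ _ _ hi]
    rw [h1, h2]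
  · intro e
    have hb := tval_bounds e (show n < n + 1 by omega)
    refine ⟨(⟨n + 1 - tval e n, by omega⟩, ⟨fun i => ⟨tval e i, ?_⟩, ?_⟩), ?_⟩
    · have := tval_bounds e (show (i : ℕ) < n + 1 by omega)
      omega
    · intro i
      exact tval_bounds e (show (i : ℕ) < n + 1 by omega)
    · apply tval_inj
      intro i hi
      by_cases h : i < n
      · simp only
        rw [tval_snoc _ _ _ h]
        simp [tval, h]
      · obtain rfl : i = n := by omega
        simp only
        rw [tval_snoc_last]
        simp only
        omega

lemma invAmaj_snoc {n : ℕ} (hn : 0 < n) (g : Fin (n + 1)) (e : InvTable n) :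
    invAmaj (n + 1) (snoc g e) =
      invAmaj n e + if (g : ℕ) < n + 1 - tval e (n - 1) then n else 0 := by
  have hg := g.2
  have hb := tval_bounds e (show n - 1 < n by omega)
  have h : invASC (n + 1) (snoc g e) =
      if (g : ℕ) < n + 1 - tval e (n - 1) then insert n (invASC n e) else invASC n e := by
    ext i
    have e1 : i ∈ invASC (n + 1) (snoc g e) ↔
        i ∈ invASC n e ∨ (i = n ∧ (g : ℕ) < n + 1 - tval e (n - 1)) := by
      rw [mem_invASC, mem_invASC]
      rcases lt_trichotomy i n with hi | hi | hi
      · by_cases h1 : 1 ≤ i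
        · rw [tval_snoc _ _ _ hi, tval_snoc _ _ _ (show i - 1 < n by omega)]
          omega
        · omega
      · subst hi
        rw [tval_snoc_last, tval_snoc _ _ _ (show i - 1 < i by omega)]
        omega
      · omega
    rw [e1]
    split_ifs with hg
    · simp [hg, or_comm]
    · simp [hg]
  have hnot : n ∉ invASC n e := by rw [mem_invASC]; omega
  rw [invAmaj, invAmaj, h]
  split_ifs
  · rw [Finset.sum_insert hnot, add_comm]
  · simp

/-- The flags of the values `n + 1, n, …, 1` available to the next entry of an inversion table of
length `n`, in this order: a value is flagged when using it does not increase `row`. -/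
def tableFlags {n : ℕ} (e : InvTable n) : List Bool :=
  (List.range (n + 1)).map fun j => decide (j = n ∨ n + 1 - j ∈ invROW n e)

lemma tableFlags_snoc {n : ℕ} (hn : 0 < n) (g : Fin (n + 1)) (e : InvTable n) :
    tableFlags (snoc g e) =
      false :: ((tableFlags e).take g ++ true :: (tableFlags e).drop (g + 1)) := by
  have hg := g.2
  have hmem : ∀ v, v ∈ invROW (n + 1) (snoc g e) ↔ v ∈ invROW n e ∨ (v ≠ 1 ∧ v = n + 1 - g) := by
    intro v
    rw [mem_invROW, mem_invROW, ← and_or_left]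
    refine and_congr Iff.rfl ⟨?_, ?_⟩
    · rintro ⟨i, hi, h⟩
      by_cases hin : i < n
      · exact Or.inl ⟨i, hin, by rwa [tval_snoc _ _ _ hin] at h⟩
      · obtain rfl : i = n := by omega
        exact Or.inr (by rw [← h, tval_snoc_last])
    · rintro (⟨i, hi, h⟩ | h)
      · exact ⟨i, by omega, by rwa [tval_snoc _ _ _ hi]⟩
      · exact ⟨n, by omega, by rw [h, tval_snoc_last]⟩
  have hlen : ((tableFlags e).take g).length = g := by simp [tableFlags]
  apply List.ext_getElem
  · simp [tableFlags]; omega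
  intro j h1 h2
  have hj : j < n + 2 := by simpa [tableFlags, Nat.lt_succ_iff] using h1
  rcases j with _ | j
  · simp only [List.getElem_cons_zero]
    simp only [tableFlags, List.getElem_map, List.getElem_range, decide_eq_false_iff_not]
    rw [hmem, mem_invROW]
    rintro (h | ⟨-, i, hi, h⟩ | h)
    · omega
    · have := tval_bounds e hi; omega
    · omega
  simp only [List.getElem_cons_succ]
  have a1 : n + 1 + 1 - (j + 1) = n + 1 - j := by omega
  by_cases c1 : j < g
  · rw [List.getElem_append_left (by omega)]
    simp only [tableFlags, List.getElem_map, List.getElem_range, List.getElem_take]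
    congr 1
    rw [hmem, a1]
    apply propext
    have : ¬ (n + 1 - j = n + 1 - g) := by omega
    simp [this]
  rw [List.getElem_append_right (by omega)]
  by_cases c2 : j = g
  · have : j - ((tableFlags e).take g).length = 0 := by omega
    simp only [this, List.getElem_cons_zero]
    simp only [tableFlags, List.getElem_map, List.getElem_range, decide_eq_true_eq]
    rw [hmem, a1]
    by_cases h0 : j = n
    · left; omega
    · right; right; omega
  · obtain ⟨i, rfl⟩ : ∃ i, j = g + 1 + i := ⟨j - g - 1, by omega⟩
    have : g + 1 + i - ((tableFlags e).take g).length = i + 1 := by omega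
    simp only [this, List.getElem_cons_succ]
    simp only [tableFlags, List.getElem_map, List.getElem_range, List.getElem_drop]
    congr 1
    rw [hmem, a1]
    apply propext
    have : ¬ (n + 1 - (g + 1 + i) = n + 1 - g) := by omega
    simp [this]

lemma count_tableFlags {n : ℕ} (e : InvTable n) :
    (tableFlags e).count true = invRow n e + 1 := by
  rw [tableFlags, count_true_map_range]
  have hrow : ∀ v ∈ invROW n e, 1 ≤ v ∧ v ≤ n := by
    intro v hv
    obtain ⟨-, i, hi, h⟩ := (mem_invROW e v).1 hv
    have := tval_bounds e hi
    omega
  have h1 : 1 ∉ invROW n e := by simp [mem_invROW]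
  rw [invRow, ← Finset.card_insert_of_notMem h1]
  refine Finset.card_bij' (fun j _ => n + 1 - j) (fun v _ => n + 1 - v) ?_ ?_ ?_ ?_
  · intro j hj
    simp only [Finset.mem_filter, Finset.mem_range, decide_eq_true_eq] at hj
    rw [Finset.mem_insert]
    rcases hj with ⟨-, h | h⟩
    · left; omega
    · right; exact h
  · intro v hv
    rw [Finset.mem_insert] at hv
    simp only [Finset.mem_filter, Finset.mem_range, decide_eq_true_eq]
    rcases hv with h | h
    · subst h; exact ⟨by omega, by left; omega⟩
    · have := hrow v h
      refine ⟨by omega, Or.inr ?_⟩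
      rwa [show n + 1 - (n + 1 - v) = v by omega]
  · intro j hj
    simp only [Finset.mem_filter, Finset.mem_range] at hj
    omega
  · intro v hv
    rw [Finset.mem_insert] at hv
    rcases hv with h | h
    · omega
    · have := hrow v h; omega

/-- The total weight of the inversion tables of length `n`. The values available to the next entry
are separated into those above the last entry and those weakly below it. -/
def tableTotal (n : ℕ) (f : ℕ → List Bool → List Bool → ℕ) : ℕ :=
  ∑ e : InvTable n, f (invAmaj n e) ((tableFlags e).take (n + 1 - tval e (n - 1))).reverse
    ((tableFlags e).drop (n + 1 - tval e (n - 1)))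

lemma tableTotal_succ {n : ℕ} (hn : 0 < n) (f : ℕ → List Bool → List Bool → ℕ)
    (hf : ∀ m, Good (f m)) : tableTotal (n + 1) f = tableTotal n (step n f) := by
  rw [tableTotal, ← (snoc_bijective n).sum_comp, Fintype.sum_prod_type_right, tableTotal]
  refine Finset.sum_congr rfl fun e _ => ?_
  rw [step_take_drop _ _ _ _ _ (by simp [tableFlags]) (by omega)]
  refine Finset.sum_congr rfl fun g _ => ?_
  have hg := g.2
  have hlen : ((tableFlags e).take g).length = g := by simp [tableFlags]
  have hs : n + 1 + 1 - (n + 1 - (g : ℕ)) = g + 1 := by omega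
  simp only [invAmaj_snoc hn, tableFlags_snoc hn, Nat.add_sub_cancel, tval_snoc_last, hs,
    List.take_succ_cons, List.drop_succ_cons]
  -- The new unflagged value sits at the far end of the left list, not next to the cut.
  apply (hf _).1
  · rw [List.take_append, hlen, List.take_of_length_le (by omega)]
    simp [List.perm_append_singleton]
  · rw [List.drop_append, hlen, List.drop_of_length_le (by omega)]
    simp

/-! ### Comparison of the totals -/

lemma permTotal_one (f : ℕ → List Bool → List Bool → ℕ) : permTotal 1 f = f 0 [false] [true] := by
  have h : ∀ π : Equiv.Perm (Fin 1), permDES 1 π = ∅ := by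
    intro π; ext i; rw [mem_permDES]; simp; omega
  have hv : ∀ π : Equiv.Perm (Fin 1), val π 0 = 0 := by
    intro π; have := val_lt π (show 0 < 1 by omega); omega
  simp [permTotal, permMaj, h, permFlags, hv, List.range_succ]

lemma tableTotal_one (f : ℕ → List Bool → List Bool → ℕ) :
    tableTotal 1 f = f 0 [false] [true] := by
  have hv : ∀ e : InvTable 1, tval e 0 = 1 := by
    intro e; have := tval_bounds e (show 0 < 1 by omega); omega
  have h : ∀ e : InvTable 1, invASC 1 e = ∅ := by
    intro e; ext i; rw [mem_invASC]; simp; omega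
  have h2 : ∀ e : InvTable 1, invROW 1 e = ∅ := by
    intro e; ext i; rw [mem_invROW]; simp [hv]; omega
  have hc : Fintype.card (InvTable 1) = 1 := by
    rw [Fintype.card_eq_one_iff]
    refine ⟨⟨fun _ => 1, by intro i; fin_cases i; simp⟩, fun e => tval_inj fun i hi => ?_⟩
    obtain rfl : i = 0 := by omega
    rw [hv, hv]
  simp [tableTotal, invAmaj, h, h2, tableFlags, hv, List.range_succ, hc]

/-- The two families have the same total weight for every good weight. -/
lemma permTotal_eq_tableTotal (n : ℕ) (hn : 1 ≤ n) :
    ∀ f : ℕ → List Bool → List Bool → ℕ, (∀ m, Good (f m)) → permTotal n f = tableTotal n f := by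
  induction n, hn using Nat.le_induction with
  | base => intro f _; rw [permTotal_one, tableTotal_one]
  | succ n hn ih =>
    intro f hf
    rw [permTotal_succ hn, tableTotal_succ hn f hf, ih _ (good_step hf)]

/-- The indicator weight selecting major index `m` and `k + 1` flagged entries. -/
def indicator (m k m' : ℕ) (X Y : List Bool) : ℕ :=
  if m' = m ∧ X.count true + Y.count true = k + 1 then 1 else 0

lemma good_indicator (m k m' : ℕ) : Good (indicator m k m') := by
  refine ⟨fun X X' Y Y' hX hY => ?_, fun X Y => ?_⟩
  · rw [indicator, indicator, hX.count_eq, hY.count_eq]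
  · simp only [indicator, List.count_cons_self, List.count_cons_of_ne, ne_eq, Bool.false_eq_true,
      not_false_eq_true]
    rw [show X.count true + 1 + Y.count true = X.count true + (Y.count true + 1) by omega, add_comm]

lemma indicator_take_drop (m k m' r s : ℕ) (P : List Bool) (h : P.count true = r + 1) :
    indicator m k m' (P.take s).reverse (P.drop s) = if m' = m ∧ r = k then 1 else 0 := by
  rw [indicator, List.count_reverse, ← List.count_append, List.take_append_drop, h]
  simp

end DoubleEulerian

open DoubleEulerian

/-- The pair `(maj, ides)` on permutations of length `n` is equidistributed
with the pair `(amaj, row)` on inversion tables of length `n`. -/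
theorem maj_ides_equidistributed_amaj_row (n : ℕ) (hn : 0 < n) (m k : ℕ) :
    (Finset.univ.filter
      (fun π : Equiv.Perm (Fin n) => permMaj n π = m ∧ permIdes n π = k)).card =
    (Finset.univ.filter
      (fun e : InvTable n => invAmaj n e = m ∧ invRow n e = k)).card := by
  rw [Finset.card_filter, Finset.card_filter]
  have h := permTotal_eq_tableTotal n hn (indicator m k) (good_indicator m k)
  simp only [permTotal, tableTotal] at h
  simp only [fun π : Equiv.Perm (Fin n) => fun s =>
      indicator_take_drop m k (permMaj n π) _ s _ (count_permFlags π),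
    fun e : InvTable n => fun s =>
      indicator_take_drop m k (invAmaj n e) _ s _ (count_tableFlags e)] at h
  exact h
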